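/- There exist a₀ ∈ (0, 1/(2π)) and a constant c < 1 such that for every a ∈ (0, a₀) and every continuously differentiable 1-periodic function q : ℝ → ℝ with ∫₀¹ q(x) dx = 0, one has max( sup_{x ∈ [0,1]} |(T_a q)(x)|, sup_{x ∈ [0,1]} |(T_a q)'(x)| ) ≤ c · max( sup_{x ∈ [0,1]} |q(x)|, sup_{x ∈ [0,1]} |q'(x)| ). -/

import Mathlib

/-- A continuous function with zero mean over `[0, 1]` vanishes somewhere. -/
theorem exists_eq_zero_of_integral_eq_zero {q : ℝ → ℝ} (hq : Continuous q)
    (h0 : (∫ x in (0:ℝ)..1, q x) = 0) : ∃ z, q z = 0 := by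
  obtain ⟨z, -, hz⟩ := exists_hasDerivAt_eq_zero (f := fun x => ∫ t in (0:ℝ)..x, q t) (f' := q)
    one_pos (fun x _ => (hq.integral_hasStrictDerivAt 0 x).hasDerivAt.continuousAt.continuousWithinAt)
    (by simp [h0]) (fun x _ => (hq.integral_hasStrictDerivAt 0 x).hasDerivAt)
  exact ⟨z, hz⟩

/-- A continuous 1-periodic function is bounded by its supremum over `[0, 1]`. -/
theorem Function.Periodic.abs_le_sSup_Icc {g : ℝ → ℝ} (hg : Continuous g)
    (hp : Function.Periodic g 1) (x : ℝ) :
    |g x| ≤ sSup ((fun x => |g x|) '' Set.Icc (0:ℝ) 1) := by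
  obtain ⟨y, hy, hxy⟩ := hp.exists_mem_Ico₀ one_pos x
  rw [hxy]
  exact le_csSup (isCompact_Icc.image hg.abs).bddAbove
    ⟨y, Set.Ico_subset_Icc_self hy, rfl⟩

/-- Poincaré inequality with constant `1/2` for mean-zero 1-periodic functions. -/
theorem Function.Periodic.abs_le_half_of_integral_eq_zero {q : ℝ → ℝ} {D : ℝ}
    (hq : Differentiable ℝ q) (hp : Function.Periodic q 1)
    (h0 : (∫ x in (0:ℝ)..1, q x) = 0) (hD : ∀ x, |deriv q x| ≤ D) (x : ℝ) :
    |q x| ≤ D / 2 := by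
  obtain ⟨z, hz⟩ := exists_eq_zero_of_integral_eq_zero hq.continuous h0
  have hmv := convex_univ.norm_image_sub_le_of_norm_deriv_le (f := q) (C := D)
    (fun y _ => hq y) (fun y _ => hD y) (Set.mem_univ z)
    (Set.mem_univ (x - round (x - z)))
  have hshift : q (x - round (x - z)) = q x := by
    simpa using hp.sub_int_mul_eq (x := x) (round (x - z))
  rw [hshift, hz, sub_zero, Real.norm_eq_abs, Real.norm_eq_abs] at hmv
  have hround : |x - round (x - z) - z| ≤ 1 / 2 := by
    simpa [sub_right_comm] using abs_sub_round (x - z)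
  have hD0 : 0 ≤ D := (abs_nonneg _).trans (hD 0)
  nlinarith

theorem hasDerivAt_two_mul_add_sin (a x : ℝ) :
    HasDerivAt (fun x : ℝ => 2*x + a*Real.sin (2*Real.pi*x))
      (2 + 2*Real.pi*a*Real.cos (2*Real.pi*x)) x := by
  have h := ((hasDerivAt_id x).const_mul 2).add
    ((((hasDerivAt_id x).const_mul (2*Real.pi)).sin).const_mul a)
  refine h.congr_deriv ?_
  simp only [id_eq]
  ring

theorem hasDerivAt_two_add_cos (a x : ℝ) :
    HasDerivAt (fun x : ℝ => 2 + 2*Real.pi*a*Real.cos (2*Real.pi*x))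
      (-(4*Real.pi^2*a*Real.sin (2*Real.pi*x))) x := by
  have h := ((((hasDerivAt_id x).const_mul (2*Real.pi)).cos).const_mul (2*Real.pi*a)).const_add 2
  refine h.congr_deriv ?_
  simp only [id_eq]
  ring

/-- A two-sided inverse of a differentiable function with positive derivative is differentiable. -/
theorem hasDerivAt_inverse_of_pos {F J φ : ℝ → ℝ} (hF : ∀ x, HasDerivAt F (J x) x)
    (hpos : ∀ x, 0 < J x) (hr : ∀ x, F (φ x) = x) (hl : ∀ x, φ (F x) = x) (x : ℝ) :
    HasDerivAt φ (J (φ x))⁻¹ x := by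
  have hmono : StrictMono F := strictMono_of_deriv_pos fun x => by
    rw [(hF x).deriv]; exact hpos x
  have hφ : Monotone φ := fun x y hxy => hmono.le_iff_le.1 (by rwa [hr, hr])
  have hcont : Continuous φ := hφ.continuous_of_surjective fun x => ⟨F x, hl x⟩
  exact (hF (φ x)).of_local_left_inverse hcont.continuousAt (hpos _).ne'
    (Filter.Eventually.of_forall hr)

/-- Derivative of one branch of the transfer operator. -/
theorem hasDerivAt_transfer_branch {J S φ q : ℝ → ℝ} {x : ℝ}
    (hq : DifferentiableAt ℝ q (φ x)) (hJ : HasDerivAt J (S (φ x)) (φ x))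
    (hne : J (φ x) ≠ 0) (hφ : HasDerivAt φ (J (φ x))⁻¹ x) :
    HasDerivAt (fun x => q (φ x) / J (φ x))
      (deriv q (φ x) / J (φ x) ^ 2 - q (φ x) * S (φ x) / J (φ x) ^ 3) x := by
  have h := (hq.hasDerivAt.comp x hφ).div (hJ.comp x hφ) hne
  refine h.congr_deriv ?_
  simp only [Function.comp_apply]
  field_simp

theorem abs_branch_le {u j D : ℝ} (hu : |u| ≤ D / 2) (hj : 3 / 2 ≤ j) : |u / j| ≤ D / 3 := by
  rw [abs_div, abs_of_pos (by linarith : 0 < j), div_le_iff₀ (by linarith)]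
  nlinarith [abs_nonneg u]

theorem abs_deriv_branch_le {u v j s D : ℝ} (hu : |u| ≤ D / 2) (hv : |v| ≤ D)
    (hs : |s| ≤ 1 / 20) (hj : 3 / 2 ≤ j) :
    |v / j ^ 2 - u * s / j ^ 3| ≤ 19 / 40 * D := by
  have hD : 0 ≤ D := (abs_nonneg v).trans hv
  have hj2 : (9 / 4 : ℝ) ≤ j ^ 2 := by nlinarith
  have hj3 : (27 / 8 : ℝ) ≤ j ^ 3 := by nlinarith
  have h1 : |v / j ^ 2| ≤ 4 / 9 * D := by
    rw [abs_div, abs_of_pos (by linarith : 0 < j ^ 2), div_le_iff₀ (by linarith)]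
    nlinarith
  have hus : |u * s| ≤ D / 40 := by
    rw [abs_mul]
    calc |u| * |s| ≤ D / 2 * (1 / 20) := by gcongr
      _ = D / 40 := by ring
  have h2 : |u * s / j ^ 3| ≤ D / 135 := by
    rw [abs_div, abs_of_pos (by linarith : 0 < j ^ 3), div_le_iff₀ (by linarith)]
    nlinarith
  linarith [abs_sub (v / j ^ 2) (u * s / j ^ 3)]

/-- `‖T_a‖_{B₀} < 1` for small `a`: there are `a₀` and `c < 1` such that for all
`a ∈ (0, a₀)` and every mean-zero `C¹` 1-periodic `q`,
`max(sup |T_a q|, sup |(T_a q)'|) ≤ c · max(sup |q|, sup |q'|)` on `[0,1]`. -/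
theorem stmt10 :
    ∃ a₀ ∈ Set.Ioo (0:ℝ) (1/(2*Real.pi)), ∃ c : ℝ, c < 1 ∧
    ∀ a ∈ Set.Ioo (0:ℝ) a₀,
    ∀ φ : ℝ → ℝ,
      (∀ x : ℝ, 2*(φ x) + a*Real.sin (2*Real.pi*(φ x)) = x) →
      (∀ x : ℝ, φ (2*x + a*Real.sin (2*Real.pi*x)) = x) →
    ∀ q : ℝ → ℝ, ContDiff ℝ 1 q → Function.Periodic q 1 →
      (∫ x in (0:ℝ)..1, q x) = 0 →
      let F : ℝ → ℝ := fun x => 2*x + a*Real.sin (2*Real.pi*x)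
      let Tq : ℝ → ℝ := fun x => q (φ x) / deriv F (φ x) + q (φ (x+1)) / deriv F (φ (x+1))
      max (sSup ((fun x => |Tq x|) '' Set.Icc (0:ℝ) 1))
          (sSup ((fun x => |deriv Tq x|) '' Set.Icc (0:ℝ) 1)) ≤
        c * max (sSup ((fun x => |q x|) '' Set.Icc (0:ℝ) 1))
                (sSup ((fun x => |deriv q x|) '' Set.Icc (0:ℝ) 1)) := by
  have hpi := Real.pi_gt_three
  have hpi' := Real.pi_lt_d2
  refine ⟨1 / 1000, ⟨by norm_num, ?_⟩, 19 / 20, by norm_num, ?_⟩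
  · exact one_div_lt_one_div_of_lt (by positivity) (by linarith)
  intro a ha φ hr hl q hq hp h0 F Tq
  have ha0 : 0 < a := ha.1
  have ha1 : a < 1 / 1000 := ha.2
  set J : ℝ → ℝ := fun x => 2 + 2*Real.pi*a*Real.cos (2*Real.pi*x) with hJ
  set S : ℝ → ℝ := fun x => -(4*Real.pi^2*a*Real.sin (2*Real.pi*x)) with hS
  have hF : ∀ x, HasDerivAt F (J x) x := hasDerivAt_two_mul_add_sin a
  have hJ' : ∀ x, HasDerivAt J (S x) x := hasDerivAt_two_add_cos a
  have hJlow : ∀ x, 3 / 2 ≤ J x := fun x => by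
    have hsmall : 2 * Real.pi * a ≤ 1 / 2 := by nlinarith
    have hnonneg : 0 ≤ 2 * Real.pi * a := by positivity
    simp only [hJ]
    nlinarith [Real.neg_one_le_cos (2*Real.pi*x)]
  have hSup : ∀ x, |S x| ≤ 1 / 20 := fun x => by
    have hsq : Real.pi ^ 2 ≤ 10 := by nlinarith
    have hsmall : 4 * Real.pi ^ 2 * a ≤ 1 / 20 := by nlinarith
    have hnonneg : 0 ≤ 4 * Real.pi ^ 2 * a := by positivity
    simp only [hS]
    rw [abs_neg, abs_mul, abs_of_nonneg hnonneg]
    nlinarith [Real.abs_sin_le_one (2*Real.pi*x)]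
  have hφ : ∀ x, HasDerivAt φ (J (φ x))⁻¹ x :=
    hasDerivAt_inverse_of_pos hF (fun x => by linarith [hJlow x]) hr hl
  have hqd : Differentiable ℝ q := hq.differentiable one_ne_zero
  have hqp : Function.Periodic (deriv q) 1 := fun x => by
    rw [← deriv_comp_add_const q 1 x]
    exact congrArg (fun g => deriv g x) (funext hp)
  set D := sSup ((fun x => |deriv q x|) '' Set.Icc (0:ℝ) 1)
  have hD : ∀ x, |deriv q x| ≤ D := hqp.abs_le_sSup_Icc (hq.continuous_deriv le_rfl)
  have hD0 : 0 ≤ D := (abs_nonneg _).trans (hD 0)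
  have hqb : ∀ x, |q x| ≤ D / 2 := hp.abs_le_half_of_integral_eq_zero hqd h0 hD
  have hTq : Tq = fun x => q (φ x) / J (φ x) + q (φ (x+1)) / J (φ (x+1)) := by
    funext x
    simp only [Tq, (hF _).deriv]
  have hbranch := fun x =>
    hasDerivAt_transfer_branch (hqd (φ x)) (hJ' (φ x)) (by linarith [hJlow (φ x)] : 0 < J (φ x)).ne'
      (hφ x)
  have hne : (Set.Icc (0:ℝ) 1).Nonempty := Set.nonempty_Icc.2 zero_le_one
  refine le_trans ?_ (mul_le_mul_of_nonneg_left (le_max_right _ D) (by norm_num))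
  refine max_le (csSup_le (hne.image _) ?_) (csSup_le (hne.image _) ?_)
  · rintro _ ⟨x, -, rfl⟩
    simp only [hTq]
    refine (abs_add_le _ _).trans ?_
    linarith [abs_branch_le (hqb (φ x)) (hJlow (φ x)),
      abs_branch_le (hqb (φ (x+1))) (hJlow (φ (x+1)))]
  · rintro _ ⟨x, -, rfl⟩
    have hderiv := ((hbranch x).add ((hbranch (x+1)).comp_add_const x 1)).deriv
    change |deriv Tq x| ≤ _
    rw [hTq]
    refine (congrArg abs hderiv).trans_le ((abs_add_le _ _).trans ?_)
    linarith [abs_deriv_branch_le (hqb (φ x)) (hD (φ x)) (hSup (φ x)) (hJlow (φ x)),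
      abs_deriv_branch_le (hqb (φ (x+1))) (hD (φ (x+1))) (hSup (φ (x+1))) (hJlow (φ (x+1)))]
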